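/- Let β > 0 and let m ≥ 1 be an integer. There exists K > 0 depending only on m and β such that for all integers n ≥ 1 and all 1 ≤ a < b < c ≤ n, E[m(a,c)·m(b,c)] = (m(m−1)(1+β)²/(2+β)²) · (a·b·c^{2+2β})^{−1/(2+β)} · (1+θ) for some real θ with |θ| ≤ K/a. -/

import Mathlib

open Finset

/-- A parent sequence of length `N`: for each `t ∈ {2,…,N}` an index `f t ∈ {1,…,t-1}`. -/
def ParentSeq (N : ℕ) : Type :=
  ∀ t : Set.Icc 2 N, Set.Icc 1 ((t : ℕ) - 1)

noncomputable instance (N : ℕ) : Fintype (ParentSeq N) := by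
  unfold ParentSeq
  classical
  infer_instance

/-- The value of a parent sequence at `j` (junk value `0` outside `{2,…,N}`). -/
def pval {N : ℕ} (f : ParentSeq N) (j : ℕ) : ℕ :=
  if h : 2 ≤ j ∧ j ≤ N then (f ⟨j, Set.mem_Icc.mpr h⟩ : ℕ) else 0

/-- The degree `d_t(v_i)` of vertex `i` at time `t` in the tree determined by `f`. -/
def deg {N : ℕ} (f : ParentSeq N) (t i : ℕ) : ℕ :=
  ((Finset.Icc 2 t).filter (fun j => pval f j = i)).card + (if 2 ≤ i then 1 else 0)

/-- The Móri probability of the parent sequence `f`. -/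
noncomputable def moriP {N : ℕ} (β : ℝ) (f : ParentSeq N) : ℝ :=
  ∏ t ∈ Finset.Icc 2 N, ((deg f (t - 1) (pval f t) : ℝ) + β) / ((2 + β) * ((t : ℝ) - 1) - 2)

/-- Expectation of `X` under the Móri measure on parent sequences of length `N`. -/
noncomputable def moriE (N : ℕ) (β : ℝ) (X : ParentSeq N → ℝ) : ℝ :=
  ∑ f : ParentSeq N, moriP β f * X f

open Classical in
/-- Probability of an event under the Móri measure on parent sequences of length `N`. -/
noncomputable def moriPr (N : ℕ) (β : ℝ) (p : ParentSeq N → Prop) : ℝ :=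
  ∑ f : ParentSeq N, if p f then moriP β f else 0

/-- The index of the merged vertex containing tree vertex `t` when merging in blocks of `m`. -/
def blk (m t : ℕ) : ℕ := (t - 1) / m + 1

/-- The number `m(a,b)` of edges joining `u_a` and `u_b` in the Móri graph `G^n_{m,β}`. -/
def mult (n m : ℕ) (f : ParentSeq (n * m)) (a b : ℕ) : ℕ :=
  ((Finset.Icc 2 (n * m)).filter (fun t =>
    (blk m t = a ∧ blk m (pval f t) = b) ∨ (blk m t = b ∧ blk m (pval f t) = a))).card

/-- The degree `d(u_i)` of the merged vertex `u_i` in the Móri graph `G^n_{m,β}`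
(a loop contributes `2`). -/
def degU (n m : ℕ) (f : ParentSeq (n * m)) (i : ℕ) : ℕ :=
  ((Finset.Icc 2 (n * m)).filter (fun t => blk m t = i)).card +
  ((Finset.Icc 2 (n * m)).filter (fun t => blk m (pval f t) = i)).card


/-- degree as a function of a plain function -/
def dg (g : ℕ → ℕ) (t i : ℕ) : ℕ :=
  ((Finset.Icc 2 t).filter (fun j => g j = i)).card + (if 2 ≤ i then 1 else 0)

lemma deg_eq_dg {N : ℕ} (f : ParentSeq N) (t i : ℕ) : deg f t i = dg (pval f) t i := rfl

/-- normalizer -/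
noncomputable def ZZ (β : ℝ) (N : ℕ) : ℝ := (2 + β) * (N : ℝ) - 2

/-- weight of a set -/
noncomputable def WW (β : ℝ) (S : Finset ℕ) (N : ℕ) (g : ℕ → ℕ) : ℝ :=
  ∑ i ∈ S, ((dg g N i : ℝ) + β)

/-- expectation of a plain functional -/
noncomputable def EE (β : ℝ) (N : ℕ) (X : (ℕ → ℕ) → ℝ) : ℝ :=
  moriE N β (fun f => X (pval f))

/-- extension of a parent sequence -/
def extP {N : ℕ} (f : ParentSeq N) (i : Set.Icc 1 N) : ParentSeq (N + 1) := fun t =>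
  if h : (t : ℕ) ≤ N then f ⟨t, Set.mem_Icc.mpr ⟨(Set.mem_Icc.mp t.2).1, h⟩⟩
  else ⟨i, by
    have h1 := Set.mem_Icc.mp t.2
    have h2 := Set.mem_Icc.mp i.2
    rw [Set.mem_Icc]; omega⟩

lemma pval_mem {N : ℕ} (f : ParentSeq N) {t : ℕ} (h2 : 2 ≤ t) (hN : t ≤ N) :
    1 ≤ pval f t ∧ pval f t ≤ t - 1 := by
  unfold pval
  rw [dif_pos ⟨h2, hN⟩]
  exact Set.mem_Icc.mp (f ⟨t, _⟩).2

lemma pval_extP {N : ℕ} (hN : 1 ≤ N) (f : ParentSeq N) (i : Set.Icc 1 N) :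
    pval (extP f i) = Function.update (pval f) (N + 1) (i : ℕ) := by
  funext j
  by_cases hj : j = N + 1
  · subst hj
    simp [pval, extP, hN]
  · rw [Function.update_of_ne hj]
    unfold pval extP
    by_cases h : 2 ≤ j ∧ j ≤ N
    · rw [dif_pos h, dif_pos ⟨h.1, by omega⟩]
      simp [h.2]
    · rw [dif_neg h, dif_neg (by omega)]

lemma pval_inj {N : ℕ} {f g : ParentSeq N} (h : ∀ t, 2 ≤ t → t ≤ N → pval f t = pval g t) :
    f = g := by
  funext t
  have ht := Set.mem_Icc.mp t.2
  have := h t ht.1 ht.2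
  unfold pval at this
  rw [dif_pos ht, dif_pos ht] at this
  exact Subtype.ext this

lemma extP_bij {N : ℕ} (hN : 1 ≤ N) :
    Function.Bijective (fun p : ParentSeq N × Set.Icc 1 N => extP p.1 p.2) := by
  constructor
  · rintro ⟨f, i⟩ ⟨g, j⟩ h
    have h' : pval (extP f i) = pval (extP g j) := congrArg pval h
    rw [pval_extP hN, pval_extP hN] at h'
    have hi : i = j := by
      have := congrFun h' (N + 1)
      simp at this
      exact Subtype.ext this
    have hf : f = g := by
      apply pval_inj
      intro t _ ht
      have := congrFun h' t
      rwa [Function.update_of_ne (by omega), Function.update_of_ne (by omega)] at this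
    rw [hi, hf]
  · intro F
    refine ⟨(fun t => ⟨F ⟨t, Set.mem_Icc.mpr ⟨(Set.mem_Icc.mp t.2).1,
      Nat.le_succ_of_le (Set.mem_Icc.mp t.2).2⟩⟩, Subtype.property _⟩,
      ⟨F ⟨N + 1, Set.mem_Icc.mpr ⟨by omega, le_rfl⟩⟩, ?_⟩), ?_⟩
    · have := (F ⟨N + 1, Set.mem_Icc.mpr ⟨by omega, le_rfl⟩⟩).2
      simpa using this
    · apply pval_inj
      intro t h2 ht
      rw [pval_extP hN]
      by_cases hj : t = N + 1
      · subst hj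
        simp [pval, hN]
      · rw [Function.update_of_ne hj]
        unfold pval
        rw [dif_pos ⟨h2, by omega⟩, dif_pos ⟨h2, by omega⟩]

lemma dg_update_of_le {N t : ℕ} (ht : t ≤ N) (g : ℕ → ℕ) (i x : ℕ) :
    dg (Function.update g (N + 1) i) t x = dg g t x := by
  unfold dg
  congr 2
  apply Finset.filter_congr
  intro j hj
  rw [Finset.mem_Icc] at hj
  rw [Function.update_of_ne (by omega)]

lemma dg_update_succ {N : ℕ} (hN : 1 ≤ N) (g : ℕ → ℕ) (i x : ℕ) :
    dg (Function.update g (N + 1) i) (N + 1) x = dg g N x + if i = x then 1 else 0 := by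
  have h : dg (Function.update g (N + 1) i) (N + 1) x =
      dg (Function.update g (N + 1) i) N x + if i = x then 1 else 0 := by
    unfold dg
    rw [← Finset.insert_Icc_right_eq_Icc_add_one (by omega : 2 ≤ N + 1), Finset.filter_insert]
    by_cases h : i = x
    · rw [if_pos (by simpa using h), Finset.card_insert_of_notMem (by simp), if_pos h]
      omega
    · rw [if_neg (by simpa using h), if_neg h]
      omega
  rw [h, dg_update_of_le le_rfl]

lemma moriP_extP {N : ℕ} (β : ℝ) (hN : 1 ≤ N) (f : ParentSeq N) (i : Set.Icc 1 N) :
    moriP β (extP f i) = moriP β f * (((dg (pval f) N i : ℝ) + β) / ZZ β N) := by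
  unfold moriP
  rw [← Finset.insert_Icc_right_eq_Icc_add_one (by omega : 2 ≤ N + 1), Finset.prod_insert (by simp), mul_comm]
  congr 1
  · apply Finset.prod_congr rfl
    intro t ht
    rw [Finset.mem_Icc] at ht
    rw [deg_eq_dg, deg_eq_dg, pval_extP hN, Function.update_of_ne (by omega),
      dg_update_of_le (by omega)]
  · rw [deg_eq_dg, pval_extP hN, Function.update_self, dg_update_of_le (by omega)]
    simp [ZZ]

lemma EE_succ {N : ℕ} (β : ℝ) (hN : 1 ≤ N) (X : (ℕ → ℕ) → ℝ) :
    EE β (N + 1) X = EE β N (fun g => ∑ i ∈ Finset.Icc 1 N,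
      (((dg g N i : ℝ) + β) / ZZ β N) * X (Function.update g (N + 1) i)) := by
  classical
  unfold EE moriE
  rw [← Function.Bijective.sum_comp (extP_bij hN)
    (fun f => moriP β f * X (pval f)), Fintype.sum_prod_type]
  apply Finset.sum_congr rfl
  intro f _
  rw [Finset.mul_sum]
  rw [Finset.sum_subtype (p := fun x => x ∈ Set.Icc 1 N) (F := (inferInstance : Fintype (Set.Icc 1 N))) (Finset.Icc 1 N)
    (by intro x; simp)]
  apply Finset.sum_congr
  · ext; simp
  intro i _
  simp only
  rw [moriP_extP β hN, pval_extP hN]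
  ring

lemma WW_total {N : ℕ} (β : ℝ) (hN : 1 ≤ N) (f : ParentSeq N) :
    WW β (Finset.Icc 1 N) N (pval f) = ZZ β N := by
  unfold WW ZZ
  rw [Finset.sum_add_distrib]
  have h1 : ∑ i ∈ Finset.Icc 1 N, dg (pval f) N i = 2 * (N - 1) := by
    unfold dg
    rw [Finset.sum_add_distrib, ← Finset.card_eq_sum_card_fiberwise]
    · rw [← Finset.card_filter]
      have : (Finset.Icc 1 N).filter (fun i => 2 ≤ i) = Finset.Icc 2 N := by
        ext; simp; omega
      rw [this]; simp; omega
    · intro j hj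
      simp only [Finset.coe_Icc, Set.mem_Icc] at hj ⊢
      have := pval_mem f hj.1 hj.2
      omega
  rw [← Nat.cast_sum, h1]
  push_cast [hN]
  simp
  ring

lemma WW_update {N : ℕ} (β : ℝ) (hN : 1 ≤ N) (S : Finset ℕ) (g : ℕ → ℕ) (j : ℕ) :
    WW β S (N + 1) (Function.update g (N + 1) j) = WW β S N g + if j ∈ S then 1 else 0 := by
  unfold WW
  simp_rw [dg_update_succ hN]
  push_cast
  rw [← Finset.sum_ite_eq S j (fun _ => (1:ℝ)), ← Finset.sum_add_distrib]
  apply Finset.sum_congr rfl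
  intros; ring

lemma ZZ_ge (β : ℝ) {N : ℕ} (hN : 1 ≤ N) : β * N ≤ ZZ β N := by
  unfold ZZ
  have : (1:ℝ) ≤ N := by exact_mod_cast hN
  linarith

lemma ZZ_pos {β : ℝ} (hβ : 0 < β) {N : ℕ} (hN : 1 ≤ N) : 0 < ZZ β N := by
  have : (1:ℝ) ≤ N := by exact_mod_cast hN
  have := ZZ_ge β hN
  nlinarith

lemma EE_congr {β : ℝ} {N : ℕ} {X Y : (ℕ → ℕ) → ℝ}
    (h : ∀ f : ParentSeq N, X (pval f) = Y (pval f)) : EE β N X = EE β N Y := by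
  unfold EE
  congr 1
  funext f
  exact h f

lemma EE_master {β : ℝ} (hβ : 0 < β) {N : ℕ} (hN : 1 ≤ N) (S T : Finset ℕ)
    (X x0 x1 x2 : (ℕ → ℕ) → ℝ)
    (hX : ∀ g, ∀ j, X (Function.update g (N + 1) j) =
      x0 g + (if j ∈ S then 1 else 0) * x1 g + (if j ∈ T then 1 else 0) * x2 g) :
    EE β (N + 1) X = EE β N (fun g => x0 g + WW β (Finset.Icc 1 N ∩ S) N g / ZZ β N * x1 g
      + WW β (Finset.Icc 1 N ∩ T) N g / ZZ β N * x2 g) := by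
  rw [EE_succ β hN]
  apply EE_congr
  intro f
  have hZ := (ZZ_pos hβ hN).ne'
  have key : ∀ U : Finset ℕ, ∀ y : ℝ, ∑ i ∈ Finset.Icc 1 N,
      (((dg (pval f) N i : ℝ) + β) / ZZ β N) * ((if i ∈ U then 1 else 0) * y) =
      WW β (Finset.Icc 1 N ∩ U) N (pval f) / ZZ β N * y := by
    intro U y
    unfold WW
    rw [Finset.sum_div, Finset.sum_mul, ← Finset.sum_ite_mem]
    apply Finset.sum_congr rfl
    intro i _
    split_ifs <;> simp
  have h0 : ∑ i ∈ Finset.Icc 1 N, (((dg (pval f) N i : ℝ) + β) / ZZ β N) * x0 (pval f)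
      = x0 (pval f) := by
    rw [← Finset.sum_mul, ← Finset.sum_div]
    have := WW_total β hN f
    unfold WW at this
    rw [this, div_self hZ, one_mul]
  simp only [hX, mul_add, Finset.sum_add_distrib]
  rw [h0, key, key]

lemma EE_one {β : ℝ} (hβ : 0 < β) {N : ℕ} (hN : 1 ≤ N) : EE β N (fun _ => 1) = 1 := by
  induction N, hN using Nat.le_induction with
  | base =>
    unfold EE moriE
    have hu : ∀ f g : ParentSeq 1, f = g := fun f g => pval_inj (fun t h2 h1 => by omega)
    let f0 : ParentSeq 1 := fun t => absurd (Set.mem_Icc.mp t.2) (by omega)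
    have : Unique (ParentSeq 1) := ⟨⟨f0⟩, fun g => hu _ _⟩
    rw [Fintype.sum_unique]
    simp [moriP]
  | succ N hN ih =>
    rw [EE_master hβ hN ∅ ∅ (fun _ => 1) (fun _ => 1) (fun _ => 0) (fun _ => 0) (by simp)]
    simpa using ih

lemma EE_const_mul {β : ℝ} {N : ℕ} (c : ℝ) (X : (ℕ → ℕ) → ℝ) :
    EE β N (fun g => c * X g) = c * EE β N X := by
  unfold EE moriE
  rw [Finset.mul_sum]
  apply Finset.sum_congr rfl
  intros; ring

lemma EE_add {β : ℝ} {N : ℕ} (X Y : (ℕ → ℕ) → ℝ) :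
    EE β N (fun g => X g + Y g) = EE β N X + EE β N Y := by
  unfold EE moriE
  rw [← Finset.sum_add_distrib]
  apply Finset.sum_congr rfl
  intros; ring

lemma EE_sum {β : ℝ} {N : ℕ} {ι : Type*} (s : Finset ι) (X : ι → (ℕ → ℕ) → ℝ) :
    EE β N (fun g => ∑ i ∈ s, X i g) = ∑ i ∈ s, EE β N (X i) := by
  unfold EE moriE
  rw [Finset.sum_comm]
  apply Finset.sum_congr rfl
  intros; rw [Finset.mul_sum]

lemma moriP_nonneg {β : ℝ} (hβ : 0 < β) {N : ℕ} (f : ParentSeq N) : 0 ≤ moriP β f := by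
  unfold moriP
  apply Finset.prod_nonneg
  intro t ht
  rw [Finset.mem_Icc] at ht
  have h := ZZ_pos hβ (N := t - 1) (by omega)
  unfold ZZ at h
  rw [Nat.cast_sub (by omega)] at h
  push_cast at h
  positivity

lemma EE_mono {β : ℝ} (hβ : 0 < β) {N : ℕ} {X Y : (ℕ → ℕ) → ℝ}
    (h : ∀ f : ParentSeq N, X (pval f) ≤ Y (pval f)) : EE β N X ≤ EE β N Y := by
  unfold EE moriE
  apply Finset.sum_le_sum
  intro f _
  exact mul_le_mul_of_nonneg_left (h f) (moriP_nonneg hβ f)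

lemma WW_nonneg {β : ℝ} (hβ : 0 < β) (S : Finset ℕ) (N : ℕ) (g : ℕ → ℕ) : 0 ≤ WW β S N g := by
  unfold WW
  positivity

lemma WW_mono {β : ℝ} (hβ : 0 < β) {S T : Finset ℕ} (h : S ⊆ T) (N : ℕ) (g : ℕ → ℕ) :
    WW β S N g ≤ WW β T N g := by
  unfold WW
  apply Finset.sum_le_sum_of_subset_of_nonneg h
  intros; positivity

lemma EE_stable {β : ℝ} (hβ : 0 < β) {M N : ℕ} (hM : 1 ≤ M) (hMN : M ≤ N) (X : (ℕ → ℕ) → ℝ)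
    (hX : ∀ k, M ≤ k → ∀ g j, X (Function.update g (k + 1) j) = X g) :
    EE β N X = EE β M X := by
  induction N, hMN using Nat.le_induction with
  | base => rfl
  | succ N hN ih =>
    rw [← ih, EE_master hβ (by omega) ∅ ∅ X X (fun _ => 0) (fun _ => 0)
      (by intro g j; simp [hX N hN])]
    simp

lemma A_gen {β : ℝ} (hβ : 0 < β) {N : ℕ} (hN : 1 ≤ N) (S : Finset ℕ) (Y : (ℕ → ℕ) → ℝ)
    (hY : ∀ g j, Y (Function.update g (N + 1) j) = Y g) :
    EE β (N + 1) (fun g => Y g * WW β S (N + 1) g) =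
      EE β N (fun g => Y g * WW β S N g + WW β (Finset.Icc 1 N ∩ S) N g / ZZ β N * Y g) := by
  rw [EE_master hβ hN S ∅ _ (fun g => Y g * WW β S N g) Y (fun _ => 0)]
  · simp
  · intro g j
    rw [WW_update β hN, hY]
    split_ifs <;> simp <;> ring

lemma A_step {β : ℝ} (hβ : 0 < β) {N : ℕ} (hN : 1 ≤ N) (S : Finset ℕ) (hS : S ⊆ Finset.Icc 1 N)
    (Y : (ℕ → ℕ) → ℝ)
    (hY : ∀ g j, Y (Function.update g (N + 1) j) = Y g) :
    EE β (N + 1) (fun g => Y g * WW β S (N + 1) g) =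
      (1 + 1 / ZZ β N) * EE β N (fun g => Y g * WW β S N g) := by
  rw [A_gen hβ hN S Y hY, ← EE_const_mul, Finset.inter_eq_right.mpr hS]
  congr 1; funext g; ring

lemma A_bd {β : ℝ} (hβ : 0 < β) {N : ℕ} (hN : 1 ≤ N) (S : Finset ℕ) :
    EE β N (WW β S N) ≤ EE β (N + 1) (WW β S (N + 1)) ∧
    EE β (N + 1) (WW β S (N + 1)) ≤ (1 + 1 / ZZ β N) * EE β N (WW β S N) := by
  have h := A_gen hβ hN S (fun _ => 1) (by simp)
  have hZ := ZZ_pos hβ hN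
  simp only [one_mul, mul_one] at h
  have e : EE β (N + 1) (WW β S (N + 1)) = EE β (N + 1) (fun g => WW β S (N + 1) g) := rfl
  rw [e, h]
  constructor
  · apply EE_mono hβ
    intro f
    have := WW_nonneg hβ (Finset.Icc 1 N ∩ S) N (pval f)
    have : 0 ≤ WW β (Finset.Icc 1 N ∩ S) N (pval f) / ZZ β N := by positivity
    linarith
  · rw [← EE_const_mul]
    apply EE_mono hβ
    intro f
    have := WW_mono hβ (Finset.inter_subset_right : Finset.Icc 1 N ∩ S ⊆ S) N (pval f)
    have := div_le_div_of_nonneg_right this hZ.le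
    rw [add_mul, one_mul, one_div_mul_eq_div]
    linarith

lemma B_gen {β : ℝ} (hβ : 0 < β) {N : ℕ} (hN : 1 ≤ N) (S T : Finset ℕ) (hST : Disjoint S T) :
    EE β (N + 1) (fun g => WW β S (N + 1) g * WW β T (N + 1) g) =
      EE β N (fun g => WW β S N g * WW β T N g + WW β (Finset.Icc 1 N ∩ S) N g / ZZ β N * WW β T N g
        + WW β (Finset.Icc 1 N ∩ T) N g / ZZ β N * WW β S N g) := by
  rw [EE_master hβ hN S T _ (fun g => WW β S N g * WW β T N g) (WW β T N) (WW β S N)]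
  intro g j
  rw [WW_update β hN, WW_update β hN]
  by_cases h1 : j ∈ S
  · have h2 : j ∉ T := Finset.disjoint_left.mp hST h1
    simp [h1, h2]; ring
  · simp only [h1, if_false]; split_ifs <;> simp <;> ring

lemma B_step {β : ℝ} (hβ : 0 < β) {N : ℕ} (hN : 1 ≤ N) (S T : Finset ℕ) (hST : Disjoint S T)
    (hS : S ⊆ Finset.Icc 1 N) (hT : T ⊆ Finset.Icc 1 N) :
    EE β (N + 1) (fun g => WW β S (N + 1) g * WW β T (N + 1) g) =
      (1 + 2 / ZZ β N) * EE β N (fun g => WW β S N g * WW β T N g) := by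
  rw [B_gen hβ hN S T hST, ← EE_const_mul, Finset.inter_eq_right.mpr hS,
    Finset.inter_eq_right.mpr hT]
  congr 1; funext g; ring

lemma B_bd {β : ℝ} (hβ : 0 < β) {N : ℕ} (hN : 1 ≤ N) (S T : Finset ℕ) (hST : Disjoint S T) :
    EE β N (fun g => WW β S N g * WW β T N g) ≤
      EE β (N + 1) (fun g => WW β S (N + 1) g * WW β T (N + 1) g) ∧
    EE β (N + 1) (fun g => WW β S (N + 1) g * WW β T (N + 1) g) ≤
      (1 + 2 / ZZ β N) * EE β N (fun g => WW β S N g * WW β T N g) := by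
  have hZ := ZZ_pos hβ hN
  rw [B_gen hβ hN S T hST]
  constructor
  · apply EE_mono hβ
    intro f
    have h1 := WW_nonneg hβ (Finset.Icc 1 N ∩ S) N (pval f)
    have h2 := WW_nonneg hβ (Finset.Icc 1 N ∩ T) N (pval f)
    have h3 := WW_nonneg hβ S N (pval f)
    have h4 := WW_nonneg hβ T N (pval f)
    have : 0 ≤ WW β (Finset.Icc 1 N ∩ S) N (pval f) / ZZ β N * WW β T N (pval f) := by positivity
    have : 0 ≤ WW β (Finset.Icc 1 N ∩ T) N (pval f) / ZZ β N * WW β S N (pval f) := by positivity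
    linarith
  · rw [← EE_const_mul]
    apply EE_mono hβ
    intro f
    have h3 := WW_nonneg hβ S N (pval f)
    have h4 := WW_nonneg hβ T N (pval f)
    have h1 := mul_le_mul_of_nonneg_right (div_le_div_of_nonneg_right
      (WW_mono hβ (Finset.inter_subset_right : Finset.Icc 1 N ∩ S ⊆ S) N (pval f)) hZ.le) h4
    have h2 := mul_le_mul_of_nonneg_right (div_le_div_of_nonneg_right
      (WW_mono hβ (Finset.inter_subset_right : Finset.Icc 1 N ∩ T ⊆ T) N (pval f)) hZ.le) h3
    have e : (1 + 2 / ZZ β N) * (WW β S N (pval f) * WW β T N (pval f)) =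
      WW β S N (pval f) * WW β T N (pval f) + WW β S N (pval f) / ZZ β N * WW β T N (pval f)
      + WW β T N (pval f) / ZZ β N * WW β S N (pval f) := by ring
    rw [e]
    linarith

lemma WW_fresh {β : ℝ} {N : ℕ} (hN : 1 ≤ N) (S : Finset ℕ) (hS : ∀ i ∈ S, N < i)
    (f : ParentSeq N) : WW β S N (pval f) = S.card * (1 + β) := by
  unfold WW
  rw [← nsmul_eq_mul, ← Finset.sum_const]
  apply Finset.sum_congr rfl
  intro i hi
  have h := hS i hi
  unfold dg
  rw [Finset.filter_false_of_mem, if_pos (by omega)]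
  · simp
  · intro j hj
    rw [Finset.mem_Icc] at hj
    have := pval_mem f hj.1 hj.2
    omega

lemma pair_aux {β : ℝ} (hβ : 0 < β) {u : ℕ} (hu : 1 ≤ u) (S T : Finset ℕ) (hST : Disjoint S T)
    (hS : S ⊆ Finset.Icc 1 u) (hT : T ⊆ Finset.Icc 1 u) (v : ℕ) (hv : u + 1 ≤ v) :
    EE β v (fun g => (if g (u + 1) ∈ S then 1 else 0) * WW β T v g) =
      (∏ r ∈ Finset.Ico (u + 1) v, (1 + 1 / ZZ β r)) *
        (EE β u (fun g => WW β S u g * WW β T u g) / ZZ β u) := by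
  induction v, hv using Nat.le_induction with
  | base =>
    rw [EE_master hβ hu S ∅ _ (fun _ => 0) (WW β T u) (fun _ => 0)]
    · rw [Finset.inter_eq_right.mpr hS, Finset.Ico_self, Finset.prod_empty, one_mul,
        div_eq_inv_mul, ← EE_const_mul]
      congr 1; funext g; ring
    · intro g j
      rw [WW_update β hu, Function.update_self]
      by_cases h1 : j ∈ S
      · have h2 : j ∉ T := Finset.disjoint_left.mp hST h1
        simp [h1, h2]
      · simp [h1]
  | succ v hv ih =>
    rw [A_step hβ (by omega) T (hT.trans (Finset.Icc_subset_Icc le_rfl (by omega))), ih,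
      Finset.prod_Ico_succ_top hv]
    · ring
    · intro g j
      rw [Function.update_of_ne (by omega)]

lemma pair_prob {β : ℝ} (hβ : 0 < β) {u : ℕ} (hu : 1 ≤ u) (S T : Finset ℕ) (hST : Disjoint S T)
    (hS : S ⊆ Finset.Icc 1 u) (hT : T ⊆ Finset.Icc 1 u) (v N : ℕ) (hv : u + 1 ≤ v)
    (hN : v + 1 ≤ N) :
    EE β N (fun g => (if g (u + 1) ∈ S then 1 else 0) * (if g (v + 1) ∈ T then 1 else 0)) =
      (∏ r ∈ Finset.Ico (u + 1) v, (1 + 1 / ZZ β r)) *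
        (EE β u (fun g => WW β S u g * WW β T u g) / ZZ β u) / ZZ β v := by
  rw [← pair_aux hβ hu S T hST hS hT v hv, EE_stable hβ (by omega : 1 ≤ v + 1) hN,
    EE_master hβ (by omega) T ∅ _ (fun _ => 0) (fun g => if g (u + 1) ∈ S then 1 else 0)
      (fun _ => 0)]
  · rw [Finset.inter_eq_right.mpr (hT.trans (Finset.Icc_subset_Icc le_rfl (by omega))),
      div_eq_inv_mul _ (ZZ β v), ← EE_const_mul]
    congr 1; funext g; ring
  · intro g j
    rw [Function.update_self, Function.update_of_ne (by omega)]
    split_ifs <;> simp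
  · intro k hk g j
    rw [Function.update_of_ne (by omega), Function.update_of_ne (by omega)]

lemma log_diff {m0 x y : ℝ} (h0 : 0 < m0) (hx : m0 ≤ x) (hy : m0 ≤ y) :
    |Real.log x - Real.log y| ≤ |x - y| / m0 := by
  have key : ∀ x y : ℝ, m0 ≤ x → m0 ≤ y → Real.log x - Real.log y ≤ |x - y| / m0 := by
    intro x y hx hy
    have hx0 : 0 < x := by linarith
    have hy0 : 0 < y := by linarith
    rw [← Real.log_div hx0.ne' hy0.ne']
    have h1 := Real.log_le_sub_one_of_pos (div_pos hx0 hy0)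
    have h2 : x / y - 1 = (x - y) / y := by field_simp
    have h3 : (x - y) / y ≤ |x - y| / y := div_le_div_of_nonneg_right (le_abs_self _) hy0.le
    have h4 : |x - y| / y ≤ |x - y| / m0 := div_le_div_of_nonneg_left (abs_nonneg _) h0 hy
    linarith
  rw [abs_le]
  have h1 := key x y hx hy
  have h2 := key y x hy hx
  rw [abs_sub_comm] at h2
  constructor <;> linarith

lemma log_one_add_bd {x : ℝ} (hx : 0 ≤ x) : |Real.log (1 + x) - x| ≤ x ^ 2 := by
  have h1 := Real.log_le_sub_one_of_pos (by linarith : 0 < 1 + x)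
  have h2 := Real.one_sub_inv_le_log_of_pos (by linarith : 0 < 1 + x)
  have h3 : 1 - (1 + x)⁻¹ ≥ x - x ^ 2 := by
    have : 1 - (1 + x)⁻¹ = x / (1 + x) := by field_simp; ring
    rw [this, ge_iff_le, le_div_iff₀ (by linarith)]
    nlinarith [pow_nonneg hx 3]
  rw [abs_le]
  constructor <;> nlinarith

lemma step_bd {β : ℝ} (hβ : 0 < β) (p : ℝ) (hp : 0 < p) : ∃ C : ℝ, 0 < C ∧ ∀ r : ℕ, 1 ≤ r →
    |Real.log (1 + p / ZZ β r) - p * (1 / (2 + β)) * (Real.log ((r + 1 : ℕ) : ℝ) - Real.log r)|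
      ≤ C / (r : ℝ) ^ 2 := by
  refine ⟨(p / β) ^ 2 + 2 * p / (β * (2 + β)) + p * (1 / (2 + β)), by positivity, ?_⟩
  intro r hr
  have hr1 : (1 : ℝ) ≤ r := by exact_mod_cast hr
  have hr0 : (0 : ℝ) < r := by linarith
  have hZ := ZZ_pos hβ hr
  have hZ2 := ZZ_ge β hr
  have h1 := log_one_add_bd (x := p / ZZ β r) (by positivity)
  have h2 := log_one_add_bd (x := 1 / (r : ℝ)) (by positivity)
  have e : Real.log ((r + 1 : ℕ) : ℝ) - Real.log r = Real.log (1 + 1 / (r : ℝ)) := by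
    rw [← Real.log_div (by positivity) hr0.ne']
    congr 1
    push_cast
    field_simp
  rw [e]
  have h3 : p / ZZ β r ≤ p / (β * r) := div_le_div_of_nonneg_left hp.le (by positivity) hZ2
  have h4 : (p / ZZ β r) ^ 2 ≤ (p / β) ^ 2 / (r : ℝ) ^ 2 := by
    have : (p / β) ^ 2 / (r : ℝ) ^ 2 = (p / (β * r)) ^ 2 := by field_simp
    rw [this]
    exact pow_le_pow_left₀ (by positivity) h3 2
  have h5 : p / ZZ β r - p * (1 / (2 + β)) * (1 / r) = 2 * p / (ZZ β r * ((2 + β) * r)) := by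
    field_simp
    unfold ZZ
    ring
  have h6 : 2 * p / (ZZ β r * ((2 + β) * r)) ≤ 2 * p / (β * (2 + β)) / (r : ℝ) ^ 2 := by
    rw [div_div]
    apply div_le_div_of_nonneg_left (by positivity) (by positivity)
    have := mul_le_mul_of_nonneg_right hZ2 (by positivity : 0 ≤ (2 + β) * (r : ℝ))
    nlinarith
  have h6' : 0 ≤ 2 * p / (ZZ β r * ((2 + β) * r)) := by positivity
  have hc : 0 < p * (1 / (2 + β)) := by positivity
  have h7 : |p * (1 / (2 + β)) * (Real.log (1 + 1 / (r : ℝ)) - 1 / r)|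
      ≤ p * (1 / (2 + β)) / (r : ℝ) ^ 2 := by
    rw [abs_mul, abs_of_pos hc]
    calc _ ≤ p * (1 / (2 + β)) * (1 / (r : ℝ)) ^ 2 := mul_le_mul_of_nonneg_left h2 hc.le
      _ = _ := by field_simp
  rw [add_div, add_div]
  rw [abs_le] at *
  constructor <;> linarith [h1.1, h1.2, h7.1, h7.2]

lemma grow_exact {β : ℝ} (hβ : 0 < β) (p : ℝ) (hp : 0 < p) : ∃ C : ℝ, 0 < C ∧
    ∀ (x : ℕ → ℝ) (s : ℕ), 1 ≤ s → 0 < x s → (∀ N, s ≤ N → x (N + 1) = (1 + p / ZZ β N) * x N) →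
    ∀ N, s ≤ N → 0 < x N ∧
      |Real.log (x N) - Real.log (x s) - p * (1 / (2 + β)) * (Real.log N - Real.log s)| ≤ C / s := by
  obtain ⟨C, hC, h⟩ := step_bd hβ p hp
  refine ⟨2 * C, by positivity, ?_⟩
  intro x s hs hxs hx
  have hs0 : (0 : ℝ) < s := by exact_mod_cast hs
  have key : ∀ N, s ≤ N → 0 < x N ∧
      |Real.log (x N) - Real.log (x s) - p * (1 / (2 + β)) * (Real.log N - Real.log s)|
        ≤ 2 * C / s - 2 * C / N := by
    intro N hN
    induction N, hN using Nat.le_induction with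
    | base => exact ⟨hxs, by simp⟩
    | succ N hN ih =>
      have hN1 : 1 ≤ N := by omega
      have hN1' : (1 : ℝ) ≤ N := by exact_mod_cast hN1
      have hZ := ZZ_pos hβ hN1
      have hf : 0 < 1 + p / ZZ β N := by positivity
      obtain ⟨ih1, ih2⟩ := ih
      rw [hx N hN]
      refine ⟨by positivity, ?_⟩
      rw [Real.log_mul hf.ne' ih1.ne']
      have h1 := h N hN1
      have h2 : C / (N : ℝ) ^ 2 ≤ 2 * C / N - 2 * C / ((N + 1 : ℕ) : ℝ) := by
        push_cast
        rw [div_sub_div _ _ (by positivity) (by positivity), div_le_div_iff₀ (by positivity)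
          (by positivity)]
        have : 0 ≤ C * (N : ℝ) * (N - 1) := by
          apply mul_nonneg (by positivity); linarith
        nlinarith
      rw [abs_le] at *
      constructor <;> linarith [h1.1, h1.2, ih2.1, ih2.2]
  intro N hN
  refine ⟨(key N hN).1, (key N hN).2.trans ?_⟩
  have : 0 ≤ 2 * C / (N : ℝ) := by positivity
  linarith

lemma grow_bd {β : ℝ} (hβ : 0 < β) (p : ℝ) (hp : 0 < p) (x : ℕ → ℝ) (s : ℕ) (hs : 1 ≤ s)
    (hxs : 0 < x s)
    (hx : ∀ N, s ≤ N → x N ≤ x (N + 1) ∧ x (N + 1) ≤ (1 + p / ZZ β N) * x N) (k : ℕ) :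
    0 < x (s + k) ∧ |Real.log (x (s + k)) - Real.log (x s)| ≤ k * (p / (β * s)) := by
  suffices 0 < x (s + k) ∧ 0 ≤ Real.log (x (s + k)) - Real.log (x s) ∧
      Real.log (x (s + k)) - Real.log (x s) ≤ k * (p / (β * s)) by
    refine ⟨this.1, ?_⟩
    rw [abs_of_nonneg this.2.1]
    exact this.2.2
  have hs0 : (0 : ℝ) < s := by exact_mod_cast hs
  induction k with
  | zero => simp [hxs]
  | succ k ih =>
    obtain ⟨i1, i2, i3⟩ := ih
    obtain ⟨h1, h2⟩ := hx (s + k) (by omega)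
    have hp' : 0 < x (s + k + 1) := by linarith
    have hZ := ZZ_pos hβ (by omega : 1 ≤ s + k)
    have hZ2 := ZZ_ge β (by omega : 1 ≤ s + k)
    have hf : 0 < 1 + p / ZZ β (s + k) := by positivity
    have l1 := Real.log_le_log i1 h1
    have l2 := Real.log_le_log hp' h2
    rw [Real.log_mul hf.ne' i1.ne'] at l2
    have l3 := Real.log_le_sub_one_of_pos hf
    have l4 : p / ZZ β (s + k) ≤ p / (β * s) := by
      apply div_le_div_of_nonneg_left hp.le (by positivity)
      push_cast at hZ2
      have : 0 ≤ β * (k : ℝ) := by positivity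
      linarith
    rw [← add_assoc]
    refine ⟨hp', by linarith, ?_⟩
    push_cast
    linarith

/-- the block of tree vertices merged into vertex a -/
def Bk (m a : ℕ) : Finset ℕ := Finset.Icc ((a - 1) * m + 1) (a * m)

lemma pred_mul_add {m a : ℕ} (ha : 1 ≤ a) : (a - 1) * m + m = a * m := by
  obtain ⟨k, rfl⟩ := Nat.exists_eq_add_of_le' ha
  simp [Nat.add_mul]

lemma Bk_card {m a : ℕ} (ha : 1 ≤ a) : (Bk m a).card = m := by
  have := pred_mul_add (m := m) ha
  unfold Bk
  rw [Nat.card_Icc]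
  omega

lemma Bk_sub {m a N : ℕ} (h : a * m ≤ N) : Bk m a ⊆ Finset.Icc 1 N := by
  intro i hi
  simp only [Bk, Finset.mem_Icc] at *
  omega

lemma le_pred_mul {m a b : ℕ} (hab : a < b) : a * m ≤ (b - 1) * m :=
  Nat.mul_le_mul_right _ (by omega)

lemma Bk_disj {m a b : ℕ} (hab : a < b) : Disjoint (Bk m a) (Bk m b) := by
  rw [Finset.disjoint_left]
  intro i hi hj
  simp only [Bk, Finset.mem_Icc] at *
  have := le_pred_mul (m := m) hab
  omega

lemma mem_Bk {m a i : ℕ} (hm : 1 ≤ m) (ha : 1 ≤ a) (hi : 1 ≤ i) :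
    i ∈ Bk m a ↔ blk m i = a := by
  obtain ⟨k, rfl⟩ := Nat.exists_eq_add_of_le' ha
  simp only [Bk, blk, Finset.mem_Icc, Nat.add_sub_cancel]
  constructor
  · rintro ⟨h1, h2⟩
    congr 1
    apply Nat.div_eq_of_lt_le
    · omega
    · omega
  · intro h
    have h' : (i - 1) / m = k := by omega
    have h1 := Nat.div_add_mod (i - 1) m
    have h2 := Nat.mod_lt (i - 1) (by omega : m > 0)
    rw [h'] at h1
    rw [Nat.add_mul, Nat.mul_comm k m]
    omega

lemma claimA {β : ℝ} (hβ : 0 < β) {m : ℕ} (hm : 1 ≤ m) : ∃ K : ℝ, 0 < K ∧ ∀ a : ℕ, 1 ≤ a →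
    ∀ N : ℕ, a * m ≤ N → 0 < EE β N (WW β (Bk m a) N) ∧
      |Real.log (EE β N (WW β (Bk m a) N)) - Real.log (m * (1 + β))
        - 1 / (2 + β) * (Real.log N - Real.log ((a : ℝ) * m))| ≤ K / a := by
  obtain ⟨C, hC, hg⟩ := grow_exact hβ 1 one_pos
  have hm0 : (0 : ℝ) < m := by exact_mod_cast hm
  set K1 : ℝ := |Real.log (ZZ β m) - Real.log (m * (1 + β))| + 2 / β with hK1
  have hK1p : 0 < K1 := by positivity
  have start : ∀ a : ℕ, 1 ≤ a → 0 < EE β (a * m) (WW β (Bk m a) (a * m)) ∧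
      |Real.log (EE β (a * m) (WW β (Bk m a) (a * m))) - Real.log (m * (1 + β))| ≤ K1 / a := by
    intro a ha
    rcases Nat.eq_or_lt_of_le ha with h1 | h1
    · subst h1
      have e : EE β (1 * m) (WW β (Bk m 1) (1 * m)) = ZZ β m := by
        have : EE β (1 * m) (WW β (Bk m 1) (1 * m)) = EE β (1 * m) (fun _ => ZZ β m * 1) := by
          apply EE_congr
          intro f
          have := WW_total β (by omega : 1 ≤ 1 * m) f
          simp only [Bk, Nat.sub_self, Nat.zero_mul, Nat.zero_add, mul_one]
          rw [this, one_mul]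
        rw [this, EE_const_mul, EE_one hβ (by omega), mul_one]
      rw [e]
      refine ⟨ZZ_pos hβ hm, ?_⟩
      rw [hK1]
      simp only [Nat.cast_one, div_one]
      have : 0 < 2 / β := by positivity
      linarith
    · have hs : 1 ≤ (a - 1) * m := Nat.mul_pos (by omega) hm
      have e : EE β ((a - 1) * m) (WW β (Bk m a) ((a - 1) * m)) = m * (1 + β) := by
        have : EE β ((a - 1) * m) (WW β (Bk m a) ((a - 1) * m)) =
            EE β ((a - 1) * m) (fun _ => (m * (1 + β)) * 1) := by
          apply EE_congr
          intro f
          rw [WW_fresh hs, Bk_card ha, mul_one]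
          intro i hi
          simp only [Bk, Finset.mem_Icc] at hi
          omega
        rw [this, EE_const_mul, EE_one hβ hs, mul_one]
      have h := grow_bd hβ 1 one_pos (fun N => EE β N (WW β (Bk m a) N)) ((a - 1) * m) hs
        (by simp only [e]; positivity) (fun N hN => A_bd hβ (by omega) _) m
      simp only [e, pred_mul_add ha] at h
      refine ⟨h.1, h.2.trans ?_⟩
      have ha' : (2 : ℝ) ≤ a := by exact_mod_cast h1
      push_cast [Nat.cast_sub ha]
      have : (m : ℝ) * (1 / (β * ((a - 1) * m))) = 1 / (β * (a - 1)) := by field_simp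
      rw [this]
      have h2 : 1 / (β * ((a : ℝ) - 1)) ≤ 2 / β / a := by
        rw [div_div, div_le_div_iff₀ (by apply mul_pos hβ; linarith) (by positivity)]
        nlinarith
      refine h2.trans ?_
      apply div_le_div_of_nonneg_right _ (by positivity)
      rw [hK1]
      have := abs_nonneg (Real.log (ZZ β m) - Real.log (m * (1 + β)))
      linarith
  refine ⟨K1 + C, by positivity, ?_⟩
  intro a ha N hN
  obtain ⟨s1, s2⟩ := start a ha
  have hs : 1 ≤ a * m := Nat.mul_pos ha hm
  have ha0 : (0 : ℝ) < a := by exact_mod_cast ha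
  have h := hg (fun N => EE β N (WW β (Bk m a) N)) (a * m) hs s1 (by
    intro N hN
    have := A_step hβ (by omega : 1 ≤ N) (Bk m a) (Bk_sub hN) (fun _ => 1) (by simp)
    simpa only [one_mul] using this) N hN
  refine ⟨h.1, ?_⟩
  have h2 := h.2
  push_cast at h2
  have h3 : C / ((a : ℝ) * m) ≤ C / a := by
    apply div_le_div_of_nonneg_left hC.le ha0
    have : (1 : ℝ) ≤ m := by exact_mod_cast hm
    nlinarith
  rw [add_div]
  rw [one_mul] at h2
  rw [abs_le] at *
  constructor <;> linarith [h2.1, h2.2, s2.1, s2.2]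

lemma claimB {β : ℝ} (hβ : 0 < β) {m : ℕ} (hm : 1 ≤ m) : ∃ K : ℝ, 0 < K ∧ ∀ a b : ℕ, 1 ≤ a →
    a < b → ∀ N : ℕ, b * m ≤ N →
      0 < EE β N (fun g => WW β (Bk m a) N g * WW β (Bk m b) N g) ∧
      |Real.log (EE β N (fun g => WW β (Bk m a) N g * WW β (Bk m b) N g))
        - 2 * Real.log (m * (1 + β))
        - 1 / (2 + β) * (Real.log ((b : ℝ) * m) - Real.log ((a : ℝ) * m))
        - 2 * (1 / (2 + β)) * (Real.log N - Real.log ((b : ℝ) * m))| ≤ K / a := by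
  obtain ⟨C, hC, hg⟩ := grow_exact hβ 2 two_pos
  obtain ⟨KA, hKA, hA⟩ := claimA hβ hm
  have hm0 : (0 : ℝ) < m := by exact_mod_cast hm
  have hm1 : (1 : ℝ) ≤ m := by exact_mod_cast hm
  refine ⟨KA + 2 + 4 / β + C, by positivity, ?_⟩
  intro a b ha hab N hN
  have ha0 : (0 : ℝ) < a := by exact_mod_cast ha
  have hb1 : 1 ≤ b := by omega
  have hab' : (a : ℝ) + 1 ≤ b := by exact_mod_cast hab
  have ha1 : (1 : ℝ) ≤ a := by exact_mod_cast ha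
  have hs : 1 ≤ (b - 1) * m := Nat.mul_pos (by omega) hm
  have hs' : 1 ≤ b * m := Nat.mul_pos (by omega) hm
  obtain ⟨a1, a2⟩ := hA a ha ((b - 1) * m) (le_pred_mul hab)
  have e : EE β ((b - 1) * m) (fun g => WW β (Bk m a) ((b - 1) * m) g *
      WW β (Bk m b) ((b - 1) * m) g) =
      (m * (1 + β)) * EE β ((b - 1) * m) (WW β (Bk m a) ((b - 1) * m)) := by
    rw [← EE_const_mul]
    apply EE_congr
    intro f
    rw [WW_fresh hs (Bk m b), Bk_card hb1]
    · ring
    · intro i hi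
      simp only [Bk, Finset.mem_Icc] at hi
      omega
  have hmb : (0 : ℝ) < m * (1 + β) := by positivity
  have h := grow_bd hβ 2 two_pos (fun N => EE β N (fun g => WW β (Bk m a) N g *
      WW β (Bk m b) N g)) ((b - 1) * m) hs
      (by simp only [e]; positivity) (fun N hN => B_bd hβ (by omega) _ _ (Bk_disj hab)) m
  simp only [e, pred_mul_add hb1] at h
  obtain ⟨b1, b2⟩ := h
  rw [Real.log_mul hmb.ne' a1.ne'] at b2
  obtain ⟨c1, c2⟩ := hg (fun N => EE β N (fun g => WW β (Bk m a) N g *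
      WW β (Bk m b) N g)) (b * m) hs' b1 (fun N hN => B_step hβ (by omega) _ _ (Bk_disj hab)
        (Bk_sub ((Nat.mul_le_mul_right _ hab.le).trans hN)) (Bk_sub hN)) N hN
  refine ⟨c1, ?_⟩
  push_cast [Nat.cast_sub hb1] at a2 b2 c2
  have hba : (a : ℝ) ≤ b - 1 := by linarith
  have hbp : (0 : ℝ) < (b : ℝ) - 1 := by linarith
  have d1 : (m : ℝ) * (2 / (β * ((b - 1) * m))) ≤ 4 / β / a := by
    have : (m : ℝ) * (2 / (β * ((b - 1) * m))) = 2 / β / (b - 1) := by field_simp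
    rw [this]
    calc 2 / β / ((b : ℝ) - 1) ≤ 2 / β / a := div_le_div_of_nonneg_left (by positivity) ha0 hba
      _ ≤ 4 / β / a := by gcongr; norm_num
  have d2 : C / ((b : ℝ) * m) ≤ C / a := by
    apply div_le_div_of_nonneg_left hC.le ha0
    nlinarith
  have d3 : |Real.log (((b : ℝ) - 1) * m) - Real.log ((b : ℝ) * m)| ≤ 1 / a := by
    refine (log_diff (m0 := a * m) (by positivity) (by gcongr) (by nlinarith)).trans ?_
    have : ((b : ℝ) - 1) * m - b * m = -m := by ring
    rw [this, abs_neg, abs_of_pos hm0]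
    apply le_of_eq
    field_simp
  have hγ : 1 / (2 + β) ≤ 1 := by
    rw [div_le_one (by positivity)]; linarith
  have hγ0 : 0 < 1 / (2 + β) := by positivity
  have d4 : |1 / (2 + β) * (Real.log (((b : ℝ) - 1) * m) - Real.log ((b : ℝ) * m))| ≤ 2 / a := by
    rw [abs_mul, abs_of_pos hγ0]
    have := abs_nonneg (Real.log (((b : ℝ) - 1) * m) - Real.log ((b : ℝ) * m))
    calc _ ≤ 1 * (1 / (a : ℝ)) := mul_le_mul hγ d3 this zero_le_one
      _ ≤ 2 / a := by rw [one_mul]; gcongr; norm_num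
  rw [add_div, add_div, add_div]
  rw [abs_le] at *
  constructor <;> linarith [a2.1, a2.2, b2.1, b2.2, c2.1, c2.2, d4.1, d4.2]

set_option maxHeartbeats 1000000 in
lemma claimP {β : ℝ} (hβ : 0 < β) {m : ℕ} (hm : 1 ≤ m) : ∃ K : ℝ, 0 < K ∧ ∀ a b c : ℕ, 1 ≤ a →
    a < b → b < c → ∀ u v : ℕ, (c - 1) * m ≤ u → u + 1 ≤ v → v + 1 ≤ c * m → ∀ P : ℝ,
      P = (∏ r ∈ Finset.Ico (u + 1) v, (1 + 1 / ZZ β r)) *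
        (EE β u (fun g => WW β (Bk m a) u g * WW β (Bk m b) u g) / ZZ β u) / ZZ β v →
      0 < P ∧ |Real.log P - (2 * Real.log (1 + β) - 2 * Real.log (2 + β)
        - 1 / (2 + β) * (Real.log a + Real.log b + (2 + 2 * β) * Real.log c))| ≤ K / a := by
  obtain ⟨KB, hKB, hB⟩ := claimB hβ hm
  have hm0 : (0 : ℝ) < m := by exact_mod_cast hm
  have hm1 : (1 : ℝ) ≤ m := by exact_mod_cast hm
  set L : ℝ := ((2 + β) * m + 2) / (β * m) with hL
  have hLp : 0 < L := by positivity
  refine ⟨KB + 2 + 2 * L + 1 / β, by positivity, ?_⟩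
  intro a b c ha hab hbc u v hu huv hv P hP
  have ha0 : (0 : ℝ) < a := by exact_mod_cast ha
  have hc1 : 1 ≤ c := by omega
  have hac : (a : ℝ) + 2 ≤ c := by exact_mod_cast (by omega : a + 2 ≤ c)
  have hb0 : (0 : ℝ) < b := by exact_mod_cast (by omega : 0 < b)
  have hc0 : (0 : ℝ) < c := by linarith
  have hbu : b * m ≤ u := (le_pred_mul hbc).trans hu
  have hcm : 1 ≤ (c - 1) * m := Nat.mul_pos (by omega) hm
  obtain ⟨b1, b2⟩ := hB a b ha hab u hbu
  -- bounds for indices in block c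
  have ub : ∀ w : ℕ, (c - 1) * m ≤ w → w ≤ c * m → (a : ℝ) * m ≤ w ∧ |(w : ℝ) - c * m| ≤ m := by
    intro w h1 h2
    have h1' : ((c : ℝ) - 1) * m ≤ w := by
      have : (((c - 1) * m : ℕ) : ℝ) ≤ w := by exact_mod_cast h1
      push_cast [Nat.cast_sub hc1] at this
      exact this
    have h2' : (w : ℝ) ≤ c * m := by exact_mod_cast h2
    constructor
    · nlinarith
    · rw [abs_le]; constructor <;> nlinarith
  have lw : ∀ w : ℕ, (c - 1) * m ≤ w → w ≤ c * m →
      |Real.log w - Real.log ((c : ℝ) * m)| ≤ 1 / a := by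
    intro w h1 h2
    obtain ⟨h3, h4⟩ := ub w h1 h2
    refine (log_diff (m0 := a * m) (by positivity) h3 (by gcongr; linarith)).trans ?_
    calc _ ≤ (m : ℝ) / (a * m) := by gcongr
      _ = 1 / a := by field_simp
  have lz : ∀ w : ℕ, (c - 1) * m ≤ w → w ≤ c * m →
      |Real.log (ZZ β w) - Real.log ((2 + β) * ((c : ℝ) * m))| ≤ L / a := by
    intro w h1 h2
    obtain ⟨h3, h4⟩ := ub w h1 h2
    have h5 := ZZ_ge β (by omega : 1 ≤ w)
    refine (log_diff (m0 := β * (a * m)) (by positivity) ?_ ?_).trans ?_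
    · refine le_trans ?_ h5
      gcongr
    · gcongr
      · linarith
      · linarith
    · have h6 : |ZZ β w - (2 + β) * ((c : ℝ) * m)| ≤ (2 + β) * m + 2 := by
        unfold ZZ
        rw [abs_le] at *
        constructor <;> nlinarith [h4.1, h4.2]
      calc _ ≤ ((2 + β) * m + 2) / (β * (a * m)) := by gcongr
        _ = L / a := by rw [hL]; field_simp
  have pr : ∀ v : ℕ, u + 1 ≤ v → 0 < (∏ r ∈ Finset.Ico (u + 1) v, (1 + 1 / ZZ β r)) ∧
      0 ≤ Real.log (∏ r ∈ Finset.Ico (u + 1) v, (1 + 1 / ZZ β r)) ∧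
      Real.log (∏ r ∈ Finset.Ico (u + 1) v, (1 + 1 / ZZ β r)) ≤
        ((v : ℝ) - (u + 1)) * (1 / (β * (a * m))) := by
    intro v hv
    induction v, hv using Nat.le_induction with
    | base => simp
    | succ v hv ih =>
      obtain ⟨i1, i2, i3⟩ := ih
      have hZ := ZZ_pos hβ (by omega : 1 ≤ v)
      have h5 := ZZ_ge β (by omega : 1 ≤ v)
      have hf : 0 < 1 + 1 / ZZ β v := by positivity
      rw [Finset.prod_Ico_succ_top hv, Real.log_mul i1.ne' hf.ne']
      have hq : 0 ≤ 1 / ZZ β v := by positivity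
      have l1 := Real.log_nonneg (by linarith : 1 ≤ 1 + 1 / ZZ β v)
      have l2 := Real.log_le_sub_one_of_pos hf
      have l3 : 1 / ZZ β v ≤ 1 / (β * (a * m)) := by
        apply div_le_div_of_nonneg_left zero_le_one (by positivity)
        refine le_trans ?_ h5
        gcongr
        have : a * m ≤ v := by
          have := Nat.mul_le_mul_right m hab.le
          omega
        exact_mod_cast this
      refine ⟨by positivity, by linarith, ?_⟩
      push_cast
      linarith
  obtain ⟨p1, p2, p3⟩ := pr v huv
  have p4 : ((v : ℝ) - (u + 1)) * (1 / (β * (a * m))) ≤ 1 / β / a := by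
    have : (v : ℝ) - (u + 1) ≤ m := by
      have hh : v ≤ u + 1 + m := by
        have := pred_mul_add (m := m) hc1
        omega
      have : (v : ℝ) ≤ u + 1 + m := by exact_mod_cast hh
      linarith
    calc _ ≤ (m : ℝ) * (1 / (β * (a * m))) := by gcongr
      _ = _ := by field_simp
  have hZu := ZZ_pos hβ (by omega : 1 ≤ u)
  have hZv := ZZ_pos hβ (by omega : 1 ≤ v)
  rw [hP]
  refine ⟨by positivity, ?_⟩
  rw [Real.log_div (by positivity) hZv.ne', Real.log_mul p1.ne' (by positivity),
    Real.log_div b1.ne' hZu.ne']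
  have z1 := lz u hu (by omega)
  have z2 := lz v (by omega) (by omega)
  have z3 := lw u hu (by omega)
  have hγ : 1 / (2 + β) ≤ 1 := by
    rw [div_le_one (by positivity)]; linarith
  have hγ0 : 0 < 1 / (2 + β) := by positivity
  have z4 : |2 * (1 / (2 + β)) * (Real.log u - Real.log ((c : ℝ) * m))| ≤ 2 / a := by
    rw [abs_mul, abs_of_pos (by positivity)]
    have := abs_nonneg (Real.log u - Real.log ((c : ℝ) * m))
    calc _ ≤ (2 * 1) * (1 / (a : ℝ)) := mul_le_mul (by linarith) z3 this (by norm_num)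
      _ = 2 / a := by ring
  rw [Real.log_mul (by positivity) (by positivity), Real.log_mul hc0.ne' hm0.ne'] at z1 z2
  rw [Real.log_mul hc0.ne' hm0.ne'] at z4
  rw [Real.log_mul hb0.ne' hm0.ne', Real.log_mul ha0.ne' hm0.ne',
    Real.log_mul hm0.ne' (by positivity)] at b2
  have hid : 1 / (2 + β) * ((2 + 2 * β) * Real.log c) = 2 * Real.log c
      - 2 * (1 / (2 + β)) * Real.log c := by
    field_simp; ring
  have e1 : (KB + 2 + 2 * L + 1 / β) / a = KB / a + 2 / a + 2 * (L / a) + 1 / β / a := by ring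
  rw [e1]
  have e2 : 1 / (2 + β) * (Real.log a + Real.log b + (2 + 2 * β) * Real.log c) =
    1 / (2 + β) * (Real.log a + Real.log b) + (2 * Real.log c
      - 2 * (1 / (2 + β)) * Real.log c) := by rw [mul_add, hid]
  rw [e2]
  rw [abs_le] at *
  constructor <;> linarith [b2.1, b2.2, z1.1, z1.2, z2.1, z2.2, z4.1, z4.2]

lemma exp_close {P M ε K : ℝ} (hP : 0 < P) (hM : 0 < M) (h : |Real.log P - Real.log M| ≤ ε)
    (hε : ε ≤ K) : |P - M| ≤ M * (ε * Real.exp K) := by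
  set δ := Real.log P - Real.log M with hδ
  have e : P = M * Real.exp δ := by
    rw [hδ, Real.exp_sub, Real.exp_log hP, Real.exp_log hM]
    field_simp
  have h0 : 0 ≤ ε := (abs_nonneg _).trans h
  have e2 : P - M = M * (Real.exp δ - 1) := by rw [e]; ring
  rw [e2, abs_mul, abs_of_pos hM]
  apply mul_le_mul_of_nonneg_left _ hM.le
  rw [abs_le] at h
  have hK : 1 ≤ Real.exp K := Real.one_le_exp (h0.trans hε)
  have h1 := Real.add_one_le_exp δ
  have h2 := Real.add_one_le_exp (-δ)
  have h3 : Real.exp δ * Real.exp (-δ) = 1 := by rw [← Real.exp_add]; simp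
  have h4 := Real.exp_pos δ
  have h5 : Real.exp δ - 1 ≤ δ * Real.exp δ := by nlinarith
  have h6 : δ * Real.exp δ ≤ ε * Real.exp δ := mul_le_mul_of_nonneg_right h.2 h4.le
  have h7 : ε * Real.exp δ ≤ ε * Real.exp K :=
    mul_le_mul_of_nonneg_left (Real.exp_le_exp.mpr (by linarith)) h0
  rw [abs_le]
  constructor <;> nlinarith

lemma mult_eq {n m a c : ℕ} (hm : 1 ≤ m) (ha : 1 ≤ a) (hac : a < c) (hcn : c ≤ n)
    (f : ParentSeq (n * m)) :
    (mult n m f a c : ℝ) = ∑ t ∈ Bk m c, (if pval f t ∈ Bk m a then 1 else 0) := by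
  unfold mult
  rw [← Finset.sum_boole]
  rw [Finset.sum_boole, Finset.sum_boole]
  congr 2
  ext t
  simp only [Finset.mem_filter, Finset.mem_Icc]
  have hcm : 1 ≤ (c - 1) * m := Nat.mul_pos (by omega) hm
  have hcn' : c * m ≤ n * m := Nat.mul_le_mul_right _ hcn
  constructor
  · rintro ⟨⟨h1, h2⟩, h⟩
    have hp := pval_mem f h1 h2
    rcases h with ⟨h3, h4⟩ | ⟨h3, h4⟩
    · exfalso
      have : blk m (pval f t) ≤ blk m t := by
        unfold blk
        have := Nat.div_le_div_right (c := m) (by omega : pval f t - 1 ≤ t - 1)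
        omega
      omega
    · exact ⟨(mem_Bk hm (by omega) (by omega)).mpr h3, (mem_Bk hm ha hp.1).mpr h4⟩
  · rintro ⟨h1, h2⟩
    have h1' := h1
    simp only [Bk, Finset.mem_Icc] at h1'
    have h3 : 2 ≤ t ∧ t ≤ n * m := by omega
    have hp := pval_mem f h3.1 h3.2
    exact ⟨h3, Or.inr ⟨(mem_Bk hm (by omega) (by omega)).mp h1, (mem_Bk hm ha hp.1).mp h2⟩⟩

/-- Expected number of pairs `(v_c,v_a), (v_c,v_b)` of adjacent half-edges in `G^n_{m,β}`
(common vertex of largest index). -/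
theorem expected_adjacent_pairs_largest_index (β : ℝ) (hβ : 0 < β) (m : ℕ) (hm : 1 ≤ m) :
    ∃ K : ℝ, 0 < K ∧ ∀ n : ℕ, 1 ≤ n → ∀ a b c : ℕ, 1 ≤ a → a < b → b < c → c ≤ n →
      ∃ θ : ℝ, |θ| ≤ K / (a : ℝ) ∧
        moriE (n * m) β (fun f => (mult n m f a c : ℝ) * (mult n m f b c : ℝ)) =
          ((m : ℝ) * ((m : ℝ) - 1) * (1 + β) ^ 2 / (2 + β) ^ 2)
            * ((a : ℝ) * (b : ℝ) * (c : ℝ) ^ (2 + 2 * β)) ^ (-(1 / (2 + β)))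
            * (1 + θ) := by
  obtain ⟨K, hK, hP⟩ := claimP hβ hm
  refine ⟨K * Real.exp K, by positivity, ?_⟩
  intro n hn a b c ha hab hbc hcn
  have ha0 : (0 : ℝ) < a := by exact_mod_cast ha
  have ha1 : (1 : ℝ) ≤ a := by exact_mod_cast ha
  have hb0 : (0 : ℝ) < b := by exact_mod_cast (by omega : 0 < b)
  have hc0 : (0 : ℝ) < c := by exact_mod_cast (by omega : 0 < c)
  set M : ℝ := (1 + β) ^ 2 / (2 + β) ^ 2 *
    ((a : ℝ) * (b : ℝ) * (c : ℝ) ^ (2 + 2 * β)) ^ (-(1 / (2 + β))) with hM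
  have hMp : 0 < M := by positivity
  have hlogM : Real.log M = 2 * Real.log (1 + β) - 2 * Real.log (2 + β)
        - 1 / (2 + β) * (Real.log a + Real.log b + (2 + 2 * β) * Real.log c) := by
    rw [hM, Real.log_mul (by positivity) (by positivity), Real.log_div (by positivity)
      (by positivity), Real.log_pow, Real.log_pow, Real.log_rpow (by positivity),
      Real.log_mul (by positivity) (by positivity), Real.log_mul (by positivity) (by positivity),
      Real.log_rpow hc0]
    push_cast
    ring
  set ε : ℝ := K * Real.exp K / a with hε
  have hε' : K / a * Real.exp K = ε := by rw [hε]; ring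
  have hKa : K / a ≤ K := div_le_self hK.le ha1
  set pp : ℕ → ℕ → ℝ := fun t s => EE β (n * m) (fun g =>
    (if g t ∈ Bk m a then 1 else 0) * (if g s ∈ Bk m b then 1 else 0)) with hpp
  have hE : moriE (n * m) β (fun f => (mult n m f a c : ℝ) * (mult n m f b c : ℝ)) =
      ∑ t ∈ Bk m c, ∑ s ∈ Bk m c, pp t s := by
    have h1 : moriE (n * m) β (fun f => (mult n m f a c : ℝ) * (mult n m f b c : ℝ)) =
        EE β (n * m) (fun g => ∑ t ∈ Bk m c, ∑ s ∈ Bk m c,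
          (if g t ∈ Bk m a then 1 else 0) * (if g s ∈ Bk m b then 1 else 0)) := by
      unfold EE
      congr 1
      funext f
      rw [mult_eq hm ha (by omega) hcn, mult_eq hm (by omega) hbc hcn, Finset.sum_mul_sum]
    rw [h1, EE_sum]
    apply Finset.sum_congr rfl
    intro t _
    rw [EE_sum]
  have hcm : 1 ≤ (c - 1) * m := Nat.mul_pos (by omega) hm
  have hcn' : c * m ≤ n * m := Nat.mul_le_mul_right _ hcn
  have hbm := le_pred_mul (m := m) hbc
  have ham := le_pred_mul (m := m) (hab.trans hbc)
  have hdiag : ∀ t, pp t t = 0 := by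
    intro t
    have : pp t t = EE β (n * m) (fun _ => 0 * 1) := by
      rw [hpp]
      apply EE_congr
      intro f
      by_cases h : pval f t ∈ Bk m a
      · have := Finset.disjoint_left.mp (Bk_disj hab) h
        simp [this]
      · simp [h]
    rw [this, EE_const_mul, zero_mul]
  have hterm : ∀ t ∈ Bk m c, ∀ s ∈ Bk m c, |pp t s - (if t = s then 0 else M)| ≤
      (if t = s then 0 else M) * ε := by
    intro t ht s hs
    simp only [Bk, Finset.mem_Icc] at ht hs
    rcases lt_trichotomy t s with h | h | h
    · obtain ⟨u, rfl⟩ := Nat.exists_eq_add_of_le' (by omega : 1 ≤ t)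
      obtain ⟨v, rfl⟩ := Nat.exists_eq_add_of_le' (by omega : 1 ≤ s)
      rw [if_neg (by omega)]
      have e := pair_prob hβ (by omega : 1 ≤ u) (Bk m a) (Bk m b) (Bk_disj hab)
        (Bk_sub (by omega)) (Bk_sub (by omega)) v (n * m) (by omega) (by omega)
      obtain ⟨q1, q2⟩ := hP a b c ha hab hbc u v (by omega) (by omega) (by omega)
        (pp (u + 1) (v + 1)) e
      rw [← hlogM] at q2
      rw [← hε']
      exact exp_close q1 hMp q2 hKa
    · simp [h, hdiag]
    · obtain ⟨v, rfl⟩ := Nat.exists_eq_add_of_le' (by omega : 1 ≤ t)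
      obtain ⟨u, rfl⟩ := Nat.exists_eq_add_of_le' (by omega : 1 ≤ s)
      rw [if_neg (by omega)]
      have e := pair_prob hβ (by omega : 1 ≤ u) (Bk m b) (Bk m a) (Bk_disj hab).symm
        (Bk_sub (by omega)) (Bk_sub (by omega)) v (n * m) (by omega) (by omega)
      have e' : pp (v + 1) (u + 1) = (∏ r ∈ Finset.Ico (u + 1) v, (1 + 1 / ZZ β r)) *
          (EE β u (fun g => WW β (Bk m a) u g * WW β (Bk m b) u g) / ZZ β u) / ZZ β v := by
        have e1 : (fun g : ℕ → ℕ => WW β (Bk m a) u g * WW β (Bk m b) u g) =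
          (fun g => WW β (Bk m b) u g * WW β (Bk m a) u g) := by
          funext g; ring
        rw [e1, ← e, hpp]
        apply EE_congr
        intro f
        ring
      obtain ⟨q1, q2⟩ := hP a b c ha hab hbc u v (by omega) (by omega) (by omega)
        (pp (v + 1) (u + 1)) e'
      rw [← hlogM] at q2
      rw [← hε']
      exact exp_close q1 hMp q2 hKa
  have hq : ∑ t ∈ Bk m c, ∑ s ∈ Bk m c, (if t = s then 0 else M) = (m : ℝ) * (m - 1) * M := by
    have : ∀ t ∈ Bk m c, ∑ s ∈ Bk m c, (if t = s then 0 else M) = ((m : ℝ) - 1) * M := by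
      intro t ht
      have h1 : ∀ s ∈ Bk m c, (if t = s then 0 else M) = M - (if t = s then M else 0) := by
        intro s _; split_ifs <;> simp
      rw [Finset.sum_congr rfl h1, Finset.sum_sub_distrib, Finset.sum_ite_eq, if_pos ht,
        Finset.sum_const, Bk_card (by omega), nsmul_eq_mul]
      ring
    rw [Finset.sum_congr rfl this, Finset.sum_const, Bk_card (by omega), nsmul_eq_mul]
    ring
  set L : ℝ := (m : ℝ) * (m - 1) * M with hL
  have hSL : |(∑ t ∈ Bk m c, ∑ s ∈ Bk m c, pp t s) - L| ≤ L * ε := by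
    rw [← hq, ← Finset.sum_sub_distrib, Finset.sum_mul]
    refine (Finset.abs_sum_le_sum_abs _ _).trans (Finset.sum_le_sum ?_)
    intro t ht
    rw [← Finset.sum_sub_distrib, Finset.sum_mul]
    refine (Finset.abs_sum_le_sum_abs _ _).trans (Finset.sum_le_sum ?_)
    intro s hs
    exact hterm t ht s hs
  set SS : ℝ := ∑ t ∈ Bk m c, ∑ s ∈ Bk m c, pp t s with hSS
  have hm1 : (1 : ℝ) ≤ m := by exact_mod_cast hm
  have hL0 : 0 ≤ L := by
    rw [hL]
    apply mul_nonneg (mul_nonneg (by linarith) (by linarith)) hMp.le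
  have hε0 : 0 ≤ ε := by positivity
  have hgoal : ∀ θ : ℝ, (m : ℝ) * ((m : ℝ) - 1) * (1 + β) ^ 2 / (2 + β) ^ 2
            * ((a : ℝ) * (b : ℝ) * (c : ℝ) ^ (2 + 2 * β)) ^ (-(1 / (2 + β)))
            * (1 + θ) = L * (1 + θ) := by
    intro θ
    rw [hL, hM]
    ring
  refine ⟨(SS - L) / L, ?_, ?_⟩
  · rcases hL0.eq_or_lt with h | h
    · rw [← h]; simpa using hε0
    · rw [abs_div, abs_of_pos h, div_le_iff₀ h]
      linarith
  · rw [hE, hgoal]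
    rcases hL0.eq_or_lt with h | h
    · rw [← h] at hSL ⊢
      simp at hSL
      simpa using hSL
    · field_simp
      ring
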